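/- Let S be a subset of chambers of a hyperplane arrangement 𝓗 in general position in ℝ^d, let e ∈ [n], and set S⁺ := {C ∈ S : C ⊂ H_e⁺}. Let A ∈ supp(S) with e ∉ A. Then every connected component c of T_S(A ∪ {e}) lies on the boundary of exactly one connected component of T_{S⁺}(A). -/

import Mathlib

open Set Topology

noncomputable section

/-- A hyperplane arrangement of `n` affine hyperplanes in `ℝ^d`, given by
nonzero normal vectors and offsets: the `i`-th hyperplane is
`{x | ∑ j, normal i j * x j = offset i}`. -/
structure Arrangement (d n : ℕ) where
  normal : Fin n → (Fin d → ℝ)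
  offset : Fin n → ℝ
  normal_ne : ∀ i, normal i ≠ 0

/-- The thickening (regular open hull) `T_S` of a set `S` of chambers. -/
def thickening {d : ℕ} (S : Set (Set (Fin d → ℝ))) : Set (Fin d → ℝ) :=
  interior (closure (⋃ C ∈ S, C))

/-- The set of connected components of a subset `X` of a topological space. -/
def connComps {α : Type*} [TopologicalSpace α] (X : Set α) : Set (Set α) :=
  {c | ∃ x ∈ X, c = connectedComponentIn X x}

namespace Arrangement

variable {d n : ℕ} (𝓗 : Arrangement d n)

/-- The `i`-th hyperplane of the arrangement. -/
def H (i : Fin n) : Set (Fin d → ℝ) := {x | ∑ j, 𝓗.normal i j * x j = 𝓗.offset i}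

/-- The positive open half-space determined by the `i`-th hyperplane. -/
def pos (i : Fin n) : Set (Fin d → ℝ) := {x | 𝓗.offset i < ∑ j, 𝓗.normal i j * x j}

/-- The negative open half-space determined by the `i`-th hyperplane. -/
def neg (i : Fin n) : Set (Fin d → ℝ) := {x | ∑ j, 𝓗.normal i j * x j < 𝓗.offset i}

/-- The complement of the union of the hyperplanes. -/
def free : Set (Fin d → ℝ) := {x | ∀ i, x ∉ 𝓗.H i}

/-- The chambers: connected components of the complement of the hyperplanes. -/
def chambers : Set (Set (Fin d → ℝ)) :=
  {C | ∃ x ∈ 𝓗.free, C = connectedComponentIn 𝓗.free x}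

/-- General position: the normals of any `≤ d` hyperplanes are linearly independent
(so that their intersection is an affine subspace of the right dimension), and no
`d+1` hyperplanes have a common point. -/
def GeneralPosition : Prop :=
  (∀ A : Finset (Fin n), A.card ≤ d →
      LinearIndependent ℝ (fun i : A => 𝓗.normal i.1)) ∧
  (∀ A : Finset (Fin n), A.card = d + 1 → (⋂ i ∈ A, 𝓗.H i) = ∅)

/-- Hyperplane `e` separates `C` from `C'`. -/
def Separates (e : Fin n) (C C' : Set (Fin d → ℝ)) : Prop :=
  (C ⊆ 𝓗.pos e ∧ C' ⊆ 𝓗.neg e) ∨ (C ⊆ 𝓗.neg e ∧ C' ⊆ 𝓗.pos e)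

/-- Adjacency in the chamber graph: two chambers are adjacent iff they are separated
by exactly one hyperplane (equivalently, share a common facet). -/
def Adj (C C' : Set (Fin d → ℝ)) : Prop :=
  C ∈ 𝓗.chambers ∧ C' ∈ 𝓗.chambers ∧ ∃! e : Fin n, 𝓗.Separates e C C'

/-- The edge boundary of a set `S` of chambers, encoded as the set of ordered pairs
`(C, C')` of adjacent chambers with `C ∈ S` and `C' ∉ S` (each boundary edge is thus
counted exactly once). -/
def edgeBoundary (S : Set (Set (Fin d → ℝ))) :
    Set ((Set (Fin d → ℝ)) × (Set (Fin d → ℝ))) :=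
  {q | q.1 ∈ S ∧ q.2 ∉ S ∧ 𝓗.Adj q.1 q.2}

/-- The stratum `T_S(A) = T_S ∩ L_A`. -/
def stratum (S : Set (Set (Fin d → ℝ))) (A : Finset (Fin n)) : Set (Fin d → ℝ) :=
  thickening S ∩ ⋂ i ∈ A, 𝓗.H i

/-- The support of `S`: those `A` with nonempty stratum. -/
def supp (S : Set (Set (Fin d → ℝ))) : Set (Finset (Fin n)) :=
  {A | (𝓗.stratum S A).Nonempty}

/-- `H_f` bounds the stratum `T_S(A)`: the stratum lies entirely in one of the open
half-spaces of `H_f`, and `H_f` meets the closure of the stratum within `L_A`. -/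
def Bounds (f : Fin n) (S : Set (Set (Fin d → ℝ))) (A : Finset (Fin n)) : Prop :=
  (𝓗.stratum S A ⊆ 𝓗.pos f ∨ 𝓗.stratum S A ⊆ 𝓗.neg f) ∧
  (𝓗.H f ∩ closure (𝓗.stratum S A) ∩ ⋂ i ∈ A, 𝓗.H i).Nonempty

/-- `S` is strata-connected if every nonempty stratum is connected. -/
def StrataConnected (S : Set (Set (Fin d → ℝ))) : Prop :=
  ∀ A ∈ 𝓗.supp S, IsConnected (𝓗.stratum S A)

end Arrangement

/-- The generalized binomial coefficient `C(x, i) = x(x-1)⋯(x-i+1)/i!`. -/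
noncomputable def gchoose (x : ℝ) (i : ℕ) : ℝ :=
  (∏ j ∈ Finset.range i, (x - j)) / (Nat.factorial i)

namespace Arrangement

variable {d n : ℕ} (𝓗 : Arrangement d n)

/-- The linear functional of the `i`-th hyperplane. -/
def fn (i : Fin n) (x : Fin d → ℝ) : ℝ := ∑ j, 𝓗.normal i j * x j

lemma fn_cont (i : Fin n) : Continuous (𝓗.fn i) := by
  unfold fn; fun_prop

lemma fn_add_smul (i : Fin n) (x v : Fin d → ℝ) (t : ℝ) :
    𝓗.fn i (x + t • v) = 𝓗.fn i x + t * 𝓗.fn i v := by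
  simp only [fn, Pi.add_apply, Pi.smul_apply, smul_eq_mul, Finset.mul_sum, ← Finset.sum_add_distrib]
  exact Finset.sum_congr rfl fun j _ => by ring

lemma fn_comb (i : Fin n) (x y : Fin d → ℝ) (a b : ℝ) :
    𝓗.fn i (a • x + b • y) = a * 𝓗.fn i x + b * 𝓗.fn i y := by
  simp only [fn, Pi.add_apply, Pi.smul_apply, smul_eq_mul, Finset.mul_sum, ← Finset.sum_add_distrib]
  exact Finset.sum_congr rfl fun j _ => by ring

lemma mem_H {i : Fin n} {x : Fin d → ℝ} : x ∈ 𝓗.H i ↔ 𝓗.fn i x = 𝓗.offset i := Iff.rfl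
lemma mem_pos {i : Fin n} {x : Fin d → ℝ} : x ∈ 𝓗.pos i ↔ 𝓗.offset i < 𝓗.fn i x := Iff.rfl
lemma mem_neg {i : Fin n} {x : Fin d → ℝ} : x ∈ 𝓗.neg i ↔ 𝓗.fn i x < 𝓗.offset i := Iff.rfl

lemma isOpen_pos (i : Fin n) : IsOpen (𝓗.pos i) := isOpen_lt continuous_const (𝓗.fn_cont i)
lemma isOpen_neg (i : Fin n) : IsOpen (𝓗.neg i) := isOpen_lt (𝓗.fn_cont i) continuous_const

lemma fn_self_pos (i : Fin n) : 0 < 𝓗.fn i (𝓗.normal i) := by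
  have h := 𝓗.normal_ne i
  obtain ⟨j, hj⟩ := Function.ne_iff.1 h
  exact Finset.sum_pos' (fun k _ => mul_self_nonneg _) ⟨j, Finset.mem_univ j, mul_self_pos.2 hj⟩

lemma pos_disj_neg (i : Fin n) : Disjoint (𝓗.pos i) (𝓗.neg i) := by
  rw [Set.disjoint_left]
  intro x h1 h2
  rw [mem_pos] at h1; rw [mem_neg] at h2; linarith

lemma chamber_side {C : Set (Fin d → ℝ)} (hC : C ∈ 𝓗.chambers) (e : Fin n) :
    C ⊆ 𝓗.pos e ∨ C ⊆ 𝓗.neg e := by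
  obtain ⟨x, hx, rfl⟩ := hC
  have hsub : connectedComponentIn 𝓗.free x ⊆ 𝓗.pos e ∪ 𝓗.neg e := by
    intro y hy
    have := connectedComponentIn_subset _ _ hy e
    rw [mem_H] at this
    rcases lt_or_gt_of_ne this with h | h
    · exact Or.inr h
    · exact Or.inl h
  exact (isPreconnected_connectedComponentIn).subset_or_subset (𝓗.isOpen_pos e) (𝓗.isOpen_neg e)
    (𝓗.pos_disj_neg e) hsub

lemma thickening_plus (S : Set (Set (Fin d → ℝ))) (hS : S ⊆ 𝓗.chambers) (e : Fin n) :
    thickening {C ∈ S | C ⊆ 𝓗.pos e} = thickening S ∩ 𝓗.pos e := by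
  apply Set.Subset.antisymm
  · apply Set.subset_inter
    · exact interior_mono (closure_mono (Set.biUnion_subset_biUnion_left fun C h => h.1))
    · intro x hx
      have hcl : closure (⋃ C ∈ {C ∈ S | C ⊆ 𝓗.pos e}, C) ⊆ {y | 𝓗.offset e ≤ 𝓗.fn e y} := by
        apply closure_minimal
        · intro y hy
          simp only [Set.mem_iUnion] at hy
          obtain ⟨C, hC, hy⟩ := hy
          exact le_of_lt (𝓗.mem_pos.1 (hC.2 hy))
        · exact isClosed_le continuous_const (𝓗.fn_cont e)
      have hx' : ∀ᶠ y in 𝓝 x, 𝓗.offset e ≤ 𝓗.fn e y :=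
        Filter.mem_of_superset (mem_interior_iff_mem_nhds.1 hx) hcl
      have ht : Filter.Tendsto (fun t : ℝ => x + t • 𝓗.normal e) (𝓝 0) (𝓝 x) := by
        have : Continuous (fun t : ℝ => x + t • 𝓗.normal e) := by fun_prop
        simpa using this.tendsto 0
      have h2 := ht.eventually hx'
      have h3 : ∃ᶠ t : ℝ in 𝓝 0, t < 0 := by
        have : ∀ᶠ t : ℝ in 𝓝[<] 0, t < 0 := eventually_mem_nhdsWithin
        exact this.frequently.filter_mono nhdsWithin_le_nhds
      obtain ⟨t, ht0, ht1⟩ := (h3.and_eventually h2).exists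
      rw [fn_add_smul] at ht1
      rw [mem_pos]
      nlinarith [𝓗.fn_self_pos e]
  · have hop : IsOpen (thickening S ∩ 𝓗.pos e) := isOpen_interior.inter (𝓗.isOpen_pos e)
    apply interior_maximal _ hop
    rintro x ⟨hx, hxp⟩
    have hx := interior_subset hx
    rw [mem_closure_iff] at hx ⊢
    intro o ho hxo
    obtain ⟨y, ⟨hyo, hyp⟩, hy⟩ := hx (o ∩ 𝓗.pos e) (ho.inter (𝓗.isOpen_pos e)) ⟨hxo, hxp⟩
    simp only [Set.mem_iUnion] at hy
    obtain ⟨C, hC, hyC⟩ := hy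
    refine ⟨y, hyo, ?_⟩
    simp only [Set.mem_iUnion]
    refine ⟨C, ⟨hC, ?_⟩, hyC⟩
    rcases 𝓗.chamber_side (hS hC) e with h | h
    · exact h
    · exact absurd (h hyC) (Set.disjoint_left.1 (𝓗.pos_disj_neg e) hyp)

lemma exists_dir (hgp : 𝓗.GeneralPosition) (e : Fin n) (A : Finset (Fin n)) (he : e ∉ A)
    (p : Fin d → ℝ) (hp : p ∈ ⋂ i ∈ insert e A, 𝓗.H i) :
    ∃ v, (∀ i ∈ A, 𝓗.fn i v = 0) ∧ 𝓗.fn e v = 1 := by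
  have hcard : (insert e A).card ≤ d := by
    by_contra hlt
    push Not at hlt
    obtain ⟨B, hB, hBc⟩ := Finset.exists_subset_card_eq (n := d + 1) hlt
    have h0 := hgp.2 B hBc
    have : p ∈ ⋂ i ∈ B, 𝓗.H i := by
      simp only [Set.mem_iInter] at hp ⊢
      exact fun i hi => hp i (hB hi)
    rw [h0] at this
    exact this
  have hli := hgp.1 _ hcard
  -- surjectivity of the evaluation map
  let M : Matrix (insert e A : Finset (Fin n)) (Fin d) ℝ := Matrix.of fun i => 𝓗.normal i.1
  have hM : LinearIndependent ℝ M.row := hli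
  have hr := hM.rank_matrix
  have hsurj : Function.Surjective M.mulVecLin := by
    rw [← LinearMap.range_eq_top]
    apply Submodule.eq_top_of_finrank_eq
    rw [← Matrix.rank, hr]; simp
  obtain ⟨v, hv⟩ := hsurj (fun i => if i.1 = e then 1 else 0)
  refine ⟨v, fun i hi => ?_, ?_⟩
  · have := congrFun hv ⟨i, Finset.mem_insert_of_mem hi⟩
    have hie : i ≠ e := fun h => he (h ▸ hi)
    simpa [M, Matrix.mulVec, dotProduct, fn, hie] using this
  · have := congrFun hv ⟨e, Finset.mem_insert_self e A⟩
    simpa [M, Matrix.mulVec, dotProduct, fn] using this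

lemma local_half (hgp : 𝓗.GeneralPosition) (S : Set (Set (Fin d → ℝ))) (hS : S ⊆ 𝓗.chambers)
    (e : Fin n) (A : Finset (Fin n)) (he : e ∉ A)
    (p : Fin d → ℝ) (hp : p ∈ 𝓗.stratum S (insert e A)) :
    ∃ U K : Set (Fin d → ℝ), IsOpen U ∧ p ∈ U ∧ IsPreconnected K ∧
      K ⊆ 𝓗.stratum {C ∈ S | C ⊆ 𝓗.pos e} A ∧
      U ∩ 𝓗.stratum {C ∈ S | C ⊆ 𝓗.pos e} A ⊆ K ∧
      ∀ q ∈ U ∩ 𝓗.stratum S (insert e A), q ∈ closure K := by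
  obtain ⟨ε, hε, hball⟩ := Metric.isOpen_iff.1 (isOpen_interior : IsOpen (thickening S)) p hp.1
  obtain ⟨v, hvA, hve⟩ := 𝓗.exists_dir hgp e A he p hp.2
  have hT := 𝓗.thickening_plus S hS e
  refine ⟨Metric.ball p ε, Metric.ball p ε ∩ ((⋂ i ∈ A, 𝓗.H i) ∩ 𝓗.pos e), Metric.isOpen_ball,
    Metric.mem_ball_self hε, ?_, ?_, ?_, ?_⟩
  · apply Convex.isPreconnected
    apply (convex_ball p ε).inter
    apply Convex.inter
    · refine convex_iInter fun i => convex_iInter fun _ => ?_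
      intro x hx y hy a b _ _ hab
      rw [mem_H] at *
      rw [fn_comb, hx, hy, ← add_mul, hab, one_mul]
    · intro x hx y hy a b ha hb hab
      rw [mem_pos] at *
      rw [fn_comb]
      have : b = 1 - a := by linarith
      subst this
      rcases ha.eq_or_lt with h | h
      · subst h; simpa using hy
      · nlinarith
  · rintro x ⟨hx, hxA, hxp⟩
    refine ⟨?_, hxA⟩
    rw [hT]; exact ⟨hball hx, hxp⟩
  · rintro x ⟨hx, hxT, hxA⟩
    rw [hT] at hxT
    exact ⟨hx, hxA, hxT.2⟩
  · rintro q ⟨hqU, -, hq⟩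
    have ht : Filter.Tendsto (fun t : ℝ => q + t • v) (𝓝[>] 0) (𝓝 q) := by
      have : Continuous (fun t : ℝ => q + t • v) := by fun_prop
      have h := this.tendsto 0
      simp only [zero_smul, add_zero] at h
      exact h.mono_left nhdsWithin_le_nhds
    refine mem_closure_of_tendsto ht ?_
    have h1 := ht.eventually (Metric.isOpen_ball.mem_nhds hqU)
    have h2 : ∀ᶠ t : ℝ in 𝓝[>] 0, 0 < t := eventually_mem_nhdsWithin
    filter_upwards [h1, h2] with t ht1 ht2
    simp only [Set.mem_iInter] at hq
    refine ⟨ht1, ?_, ?_⟩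
    · simp only [Set.mem_iInter]
      intro i hi
      have := hq i (Finset.mem_insert_of_mem hi)
      rw [mem_H] at *
      rw [fn_add_smul, this, hvA i hi]; simp
    · have := hq e (Finset.mem_insert_self e A)
      rw [mem_H] at this
      rw [mem_pos, fn_add_smul, this, hve]; linarith

end Arrangement

/-- Let `S⁺ := {C ∈ S | C ⊂ H_e⁺}`, let `A ∈ supp S` with `e ∉ A`.
Then every connected component `c` of `T_S(A ∪ {e})` lies on the boundary of exactly
one connected component of `T_{S⁺}(A)`. -/
theorem stmt2 {d n : ℕ} (𝓗 : Arrangement d n) (hgp : 𝓗.GeneralPosition)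
    (S : Set (Set (Fin d → ℝ))) (hS : S ⊆ 𝓗.chambers)
    (e : Fin n) (A : Finset (Fin n)) (hA : A ∈ 𝓗.supp S) (he : e ∉ A) :
    ∀ c ∈ connComps (𝓗.stratum S (insert e A)),
      ∃! c', c' ∈ connComps (𝓗.stratum {C ∈ S | C ⊆ 𝓗.pos e} A) ∧
        c ⊆ closure c' := by
  intro c hc
  obtain ⟨p, hp, rfl⟩ := hc
  set X := 𝓗.stratum S (insert e A) with hX
  set Y := 𝓗.stratum {C ∈ S | C ⊆ 𝓗.pos e} A with hY
  have key := fun q hq => 𝓗.local_half hgp S hS e A he q hq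
  rw [← hX, ← hY] at key
  -- if a component meets `K` then it contains `K`
  have hcontain : ∀ (y : Fin d → ℝ) (K : Set (Fin d → ℝ)), IsPreconnected K → K ⊆ Y →
      (K ∩ connectedComponentIn Y y).Nonempty → K ⊆ connectedComponentIn Y y := by
    rintro y K hK hKY ⟨z, hzK, hz⟩
    rw [connectedComponentIn_eq hz]
    exact hK.subset_connectedComponentIn hzK hKY
  obtain ⟨U, K, hU, hpU, hK, hKY, hUK, hcl⟩ := key p hp
  have hpK : p ∈ closure K := hcl p ⟨hpU, hp⟩
  obtain ⟨y, hyK⟩ : K.Nonempty := closure_nonempty_iff.1 ⟨p, hpK⟩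
  have hKy : K ⊆ connectedComponentIn Y y := hK.subset_connectedComponentIn hyK hKY
  have hpc : p ∈ connectedComponentIn X p := mem_connectedComponentIn hp
  refine ⟨connectedComponentIn Y y, ⟨⟨y, hKY hyK, rfl⟩, ?_⟩, ?_⟩
  · intro q hq
    have hind := (isPreconnected_connectedComponentIn (F := X) (x := p)).induction₂
      (fun a b => a ∈ closure (connectedComponentIn Y y) ↔ b ∈ closure (connectedComponentIn Y y))
      (by
        intro a ha
        obtain ⟨V, L, hV, haV, hL, hLY, hVL, hcl'⟩ := key a (connectedComponentIn_subset _ _ ha)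
        have hstep : ∀ b ∈ V, b ∈ closure (connectedComponentIn Y y) →
            L ⊆ connectedComponentIn Y y := by
          intro b hb hbc
          obtain ⟨z, hzV, hz⟩ := mem_closure_iff.1 hbc V hV hb
          exact hcontain y L hL hLY ⟨z, hVL ⟨hzV, connectedComponentIn_subset _ _ hz⟩, hz⟩
        filter_upwards [self_mem_nhdsWithin, mem_nhdsWithin_of_mem_nhds (hV.mem_nhds haV)]
          with b hb hbV
        exact ⟨fun h => closure_mono (hstep a haV h) (hcl' b ⟨hbV, connectedComponentIn_subset _ _ hb⟩),
          fun h => closure_mono (hstep b hbV h) (hcl' a ⟨haV, connectedComponentIn_subset _ _ ha⟩)⟩)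
      (fun a b c _ _ _ h1 h2 => h1.trans h2) (fun a b _ _ h => h.symm) hpc hq
    exact hind.1 (closure_mono hKy hpK)
  · rintro c'' ⟨⟨y', hy', rfl⟩, hsub⟩
    obtain ⟨z, hzU, hz⟩ := mem_closure_iff.1 (hsub hpc) U hU hpU
    have hzK : z ∈ K := hUK ⟨hzU, connectedComponentIn_subset _ _ hz⟩
    rw [connectedComponentIn_eq hz, connectedComponentIn_eq (hKy hzK)]
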